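/- arXiv:2507.20708 — 7 statements merged into one kernel-verified Lean document; each statement's English description precedes it below -/
import Mathlib

section
/- Let n ≥ 1, k ≥ 1 and φ₁,…,φₙ ∈ ℝ^k. Assume the empirical covariance matrix C = (1/n)Σᵢφᵢφᵢᵀ − φ̄φ̄ᵀ (with φ̄ = (1/n)Σᵢφᵢ) is invertible, and that t ∈ ℝ^k can be written as t = Σᵢ wᵢφᵢ with weights wᵢ > 0, Σᵢ wᵢ = 1. Let ξ(t) be the unique global minimizer of H(ξ) = log Z(ξ) − ⟨ξ,t⟩ and define the probability vector q ∈ ℝⁿ by qᵢ = λᵢ(ξ(t))/n. Then q satisfies the constraint Σᵢ qᵢφᵢ = t, and for every probability vector p ∈ ℝⁿ with Σᵢ pᵢφᵢ = t one has KL(p) ≥ KL(q), with equality if and only if p = q. In other words, q is the unique minimizer of the Kullback–Leibler divergence to the uniform vector among all probability vectors satisfying the linear constraint Σᵢ pᵢφᵢ = t. -/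
theorem aux_kl (n p q : ℝ) (hn : 0 < n) (hp : 0 ≤ p) (hq : 0 < q) :
    0 ≤ p * Real.log (n * p) - p * Real.log (n * q) - p + q ∧
    (p * Real.log (n * p) - p * Real.log (n * q) - p + q = 0 → p = q) := by
  rcases hp.eq_or_lt with h | h
  · subst h
    simp only [zero_mul, sub_zero, zero_add]
    exact ⟨hq.le, fun h => by linarith⟩
  · have e : p * Real.log (n * p) - p * Real.log (n * q) - p + q
        = p * (q / p - 1 - Real.log (q / p)) := by
      rw [Real.log_mul hn.ne' h.ne', Real.log_mul hn.ne' hq.ne', Real.log_div hq.ne' h.ne']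
      field_simp
      ring
    rw [e]
    have h1 := Real.log_le_sub_one_of_pos (div_pos hq h)
    refine ⟨mul_nonneg hp (by linarith), fun h0 => ?_⟩
    by_contra hne
    have h2 : q / p ≠ 1 := fun h3 => hne ((div_eq_one_iff_eq h.ne').1 h3).symm
    have h3 := Real.log_lt_sub_one_of_pos (div_pos hq h) h2
    have : 0 < p * (q / p - 1 - Real.log (q / p)) := mul_pos h (by linarith)
    linarith

/-- under invertibility of the empirical covariance matrix and
representability of `t` as a strictly positive convex combination of the `φᵢ`,
if `ξt` is the global minimizer of `H(ξ) = log Z(ξ) − ⟨ξ,t⟩` and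
`qᵢ = λᵢ(ξt)/n` (with Gibbs weights `λᵢ(ξ) = exp(⟨ξ,φᵢ⟩ − log Z(ξ))`), then
`q` satisfies the linear constraint `Σᵢ qᵢφᵢ = t`, and `q` is the unique minimizer of
the Kullback–Leibler divergence `KL(p) = Σᵢ pᵢ log(n pᵢ)` to the uniform vector among
all probability vectors `p` with `Σᵢ pᵢφᵢ = t`. -/
theorem entropic_projection_characterization (n k : ℕ) (hn : 1 ≤ n) (hk : 1 ≤ k)
    (φ : Fin n → Fin k → ℝ) (t : Fin k → ℝ)
    (hC : IsUnit (Matrix.of (fun i j : Fin k =>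
      (1 / n : ℝ) * ∑ a, φ a i * φ a j -
        ((1 / n : ℝ) * ∑ a, φ a i) * ((1 / n : ℝ) * ∑ a, φ a j))))
    (w : Fin n → ℝ) (hw : ∀ i, 0 < w i) (hw1 : ∑ i, w i = 1)
    (ht : ∀ j, t j = ∑ i, w i * φ i j)
    (ξt : Fin k → ℝ)
    (hξt : ∀ ξ : Fin k → ℝ,
      (Real.log ((1 / n : ℝ) * ∑ a, Real.exp (∑ j, φ a j * ξt j)) - ∑ j, ξt j * t j)
        ≤ (Real.log ((1 / n : ℝ) * ∑ a, Real.exp (∑ j, φ a j * ξ j)) - ∑ j, ξ j * t j))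
    (q : Fin n → ℝ)
    (hq : ∀ i, q i = Real.exp ((∑ j, ξt j * φ i j) -
      Real.log ((1 / n : ℝ) * ∑ a, Real.exp (∑ j, φ a j * ξt j))) / n) :
    (∀ j, ∑ i, q i * φ i j = t j) ∧
      ∀ p : Fin n → ℝ, (∀ i, 0 ≤ p i) → (∑ i, p i = 1) →
        (∀ j, ∑ i, p i * φ i j = t j) →
        (∑ i, q i * Real.log (n * q i)) ≤ (∑ i, p i * Real.log (n * p i)) ∧
          ((∑ i, p i * Real.log (n * p i)) = (∑ i, q i * Real.log (n * q i)) ↔ p = q) := by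
  have hn0 : (0 : ℝ) < n := by exact_mod_cast hn
  have : Nonempty (Fin n) := ⟨⟨0, hn⟩⟩
  set Z : ℝ := (1 / n : ℝ) * ∑ a, Real.exp (∑ j, φ a j * ξt j) with hZ
  have hS : 0 < ∑ a, Real.exp (∑ j, φ a j * ξt j) :=
    Finset.sum_pos (fun a _ => Real.exp_pos _) Finset.univ_nonempty
  have hZpos : 0 < Z := by positivity
  have hq' : ∀ i, q i = Real.exp (∑ j, φ i j * ξt j) / (n * Z) := by
    intro i
    rw [hq, Real.exp_sub, Real.exp_log hZpos, div_div, mul_comm Z]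
    simp only [mul_comm (ξt _)]
  have hqpos : ∀ i, 0 < q i := by
    intro i
    rw [hq']
    positivity
  have hnZ : (n : ℝ) * Z = ∑ a, Real.exp (∑ j, φ a j * ξt j) := by
    rw [hZ]
    field_simp
  have hq1 : ∑ i, q i = 1 := by
    simp only [hq', ← Finset.sum_div]
    rw [hnZ, div_self hS.ne']
  have hcon : ∀ j, ∑ i, q i * φ i j = t j := by
    intro j
    have hd : HasDerivAt (fun s : ℝ => Real.log ((1 / n : ℝ) *
        ∑ a, Real.exp (∑ l, φ a l * ξt l + s * φ a j)) - (∑ l, ξt l * t l + s * t j))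
        (((1 / n : ℝ) * ∑ a, Real.exp (∑ l, φ a l * ξt l + 0 * φ a j) * (1 * φ a j)) /
          ((1 / n : ℝ) * ∑ a, Real.exp (∑ l, φ a l * ξt l + 0 * φ a j)) - 1 * t j) 0 := by
      refine HasDerivAt.sub (HasDerivAt.log (HasDerivAt.const_mul _
        (HasDerivAt.fun_sum fun a _ => HasDerivAt.exp
          (((hasDerivAt_id (0 : ℝ)).mul_const _).const_add _))) ?_)
        (((hasDerivAt_id (0 : ℝ)).mul_const _).const_add _)
      simp only [id, zero_mul, add_zero]
      exact hZpos.ne'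
    have hmin : IsLocalMin (fun s : ℝ => Real.log ((1 / n : ℝ) *
        ∑ a, Real.exp (∑ l, φ a l * ξt l + s * φ a j)) - (∑ l, ξt l * t l + s * t j)) 0 := by
      refine Filter.Eventually.of_forall fun s => ?_
      have h := hξt (ξt + Pi.single j s : Fin k → ℝ)
      have e1 : ∀ a, ∑ l, φ a l * (ξt + Pi.single j s : Fin k → ℝ) l = ∑ l, φ a l * ξt l + s * φ a j := by
        intro a
        simp [mul_add, Finset.sum_add_distrib, Pi.single_apply, mul_comm s]
      have e2 : ∑ l, (ξt + Pi.single j s : Fin k → ℝ) l * t l = ∑ l, ξt l * t l + s * t j := by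
        simp [add_mul, Finset.sum_add_distrib, Pi.single_apply]
      simp only [e1, e2] at h
      simpa only [zero_mul, add_zero] using h
    have h0 := hmin.hasDerivAt_eq_zero hd
    simp only [zero_mul, add_zero, one_mul] at h0
    rw [← hZ] at h0
    rw [← sub_eq_zero, ← h0]
    congr 1
    simp only [hq', Finset.mul_sum, Finset.sum_div]
    refine Finset.sum_congr rfl fun i _ => ?_
    field_simp
  have hlog : ∀ i, Real.log (n * q i) = (∑ j, ξt j * φ i j) - Real.log Z := by
    intro i
    rw [hq, mul_div_cancel₀ _ hn0.ne', Real.log_exp]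
  have hcross : ∀ p : Fin n → ℝ, (∑ i, p i = 1) → (∀ j, ∑ i, p i * φ i j = t j) →
      ∑ i, p i * Real.log (n * q i) = ∑ j, ξt j * t j - Real.log Z := by
    intro p hp1 hpt
    simp only [hlog, mul_sub, Finset.sum_sub_distrib, ← Finset.sum_mul, hp1, one_mul]
    congr 1
    simp only [← hpt, Finset.mul_sum]
    rw [Finset.sum_comm]
    refine Finset.sum_congr rfl fun i _ => Finset.sum_congr rfl fun j _ => ?_
    ring
  refine ⟨hcon, fun p hp hp1 hpt => ?_⟩
  have hsum : ∑ i, (p i * Real.log (n * p i) - p i * Real.log (n * q i) - p i + q i)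
      = ∑ i, p i * Real.log (n * p i) - ∑ i, q i * Real.log (n * q i) := by
    rw [Finset.sum_add_distrib, Finset.sum_sub_distrib, Finset.sum_sub_distrib,
      hcross p hp1 hpt, hcross q hq1 hcon, hp1, hq1]
    ring
  have hnn : ∀ i ∈ Finset.univ,
      0 ≤ p i * Real.log (n * p i) - p i * Real.log (n * q i) - p i + q i :=
    fun i _ => (aux_kl n (p i) (q i) hn0 (hp i) (hqpos i)).1
  refine ⟨?_, fun h => ?_, fun h => by rw [h]⟩
  · have := Finset.sum_nonneg hnn
    linarith
  · have h0 : ∑ i, (p i * Real.log (n * p i) - p i * Real.log (n * q i) - p i + q i) = 0 := by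
      rw [hsum, h, sub_self]
    funext i
    exact (aux_kl n (p i) (q i) hn0 (hp i) (hqpos i)).2
      ((Finset.sum_eq_zero_iff_of_nonneg hnn).1 h0 i (Finset.mem_univ i))
end

section
/- Let λ₀, λ₁, n₀, n₁, Δ be strictly positive real numbers, and set δ = λ₁ / (1 + (n₁/(n₀·Δ))·(1 + λ₀/λ₁)). Then 0 < δ < λ₁ and ((λ₀ + δ)/n₀)·(n₁/(λ₁ − δ)) = (λ₀/n₀)·(n₁/λ₁) + Δ. That is, in the balanced case δ₀ = δ₁ = δ, adding δ to the numerator count and subtracting δ from the denominator count raises the Disparate Impact by exactly Δ. -/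
/-- balanced case: for strictly positive reals `λ₀ λ₁ n₀ n₁ Δ`, with
`δ = λ₁ / (1 + (n₁/(n₀·Δ))·(1 + λ₀/λ₁))`, one has `0 < δ < λ₁` and the Disparate
Impact increases by exactly `Δ`. -/
theorem balanced_fairwashing (lam0 lam1 n0 n1 Δ δ : ℝ)
    (hlam0 : 0 < lam0) (hlam1 : 0 < lam1) (hn0 : 0 < n0) (hn1 : 0 < n1) (hΔ : 0 < Δ)
    (hδ : δ = lam1 / (1 + (n1 / (n0 * Δ)) * (1 + lam0 / lam1))) :
    0 < δ ∧ δ < lam1 ∧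
      ((lam0 + δ) / n0) * (n1 / (lam1 - δ)) = (lam0 / n0) * (n1 / lam1) + Δ := by
  have hK : 0 < (n1 / (n0 * Δ)) * (1 + lam0 / lam1) := by positivity
  have hpos : 0 < δ := by rw [hδ]; positivity
  have hlt : δ < lam1 := by
    rw [hδ]
    exact div_lt_self hlam1 (by linarith)
  have key : δ * (n0 * Δ * lam1 + n1 * (lam1 + lam0)) = lam1 * (n0 * Δ * lam1) := by
    have hD : n0 * Δ * lam1 + n1 * (lam1 + lam0) ≠ 0 := by positivity
    have h1 : 1 + (n1 / (n0 * Δ)) * (1 + lam0 / lam1)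
        = (n0 * Δ * lam1 + n1 * (lam1 + lam0)) / (n0 * Δ * lam1) := by
      field_simp
    rw [hδ, h1, div_div_eq_mul_div, div_mul_cancel₀ _ hD]
  refine ⟨hpos, hlt, ?_⟩
  have hsub : lam1 - δ ≠ 0 := (sub_pos.mpr hlt).ne'
  have h2 : lam0 / n0 * (n1 / lam1) + Δ = (lam0 * n1 + Δ * (n0 * lam1)) / (n0 * lam1) := by
    field_simp
  rw [h2, div_mul_div_comm, div_eq_div_iff (by positivity) (by positivity)]
  linear_combination n0 * key
end

section
/- Let λ₀, λ₁, n₀, n₁, Δ be strictly positive real numbers, set δ₁ = λ₁ / (1 + (1/Δ)·(1 + (n₁·λ₀)/(n₀·λ₁))) and δ₀ = (n₀/n₁)·δ₁. Then 0 < δ₁ < λ₁ and ((λ₀ + δ₀)/n₀)·(n₁/(λ₁ − δ₁)) = (λ₀/n₀)·(n₁/λ₁) + Δ. That is, in the proportional case δ₀/n₀ = δ₁/n₁, adding δ₀ to the numerator count and subtracting δ₁ from the denominator count raises the Disparate Impact by exactly Δ. -/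
/-- proportional case: for strictly positive reals `λ₀ λ₁ n₀ n₁ Δ`, with
`δ₁ = λ₁ / (1 + (1/Δ)·(1 + (n₁·λ₀)/(n₀·λ₁)))` and `δ₀ = (n₀/n₁)·δ₁`, one has
`0 < δ₁ < λ₁` and the Disparate Impact increases by exactly `Δ`. -/
theorem proportional_fairwashing (lam0 lam1 n0 n1 Δ δ0 δ1 : ℝ)
    (hlam0 : 0 < lam0) (hlam1 : 0 < lam1) (hn0 : 0 < n0) (hn1 : 0 < n1) (hΔ : 0 < Δ)
    (hδ1 : δ1 = lam1 / (1 + (1 / Δ) * (1 + (n1 * lam0) / (n0 * lam1))))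
    (hδ0 : δ0 = (n0 / n1) * δ1) :
    0 < δ1 ∧ δ1 < lam1 ∧
      ((lam0 + δ0) / n0) * (n1 / (lam1 - δ1)) = (lam0 / n0) * (n1 / lam1) + Δ := by
  have hq : 0 < (1 / Δ) * (1 + (n1 * lam0) / (n0 * lam1)) := by positivity
  have hpos : 0 < δ1 := by rw [hδ1]; positivity
  have hlt : δ1 < lam1 := by
    rw [hδ1]
    exact div_lt_self hlam1 (by linarith)
  refine ⟨hpos, hlt, ?_⟩
  have hk : δ1 * (n0 * lam1 * (Δ + 1) + n1 * lam0) = Δ * lam1 * (n0 * lam1) := by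
    have h1 : δ1 * (1 + (1 / Δ) * (1 + (n1 * lam0) / (n0 * lam1))) = lam1 := by
      rw [hδ1]
      exact div_mul_cancel₀ _ (by linarith)
    have h2 : n0 * lam1 * (Δ + 1) + n1 * lam0
        = (1 + (1 / Δ) * (1 + (n1 * lam0) / (n0 * lam1))) * (Δ * (n0 * lam1)) := by
      field_simp
      ring
    rw [h2, ← mul_assoc, h1]
    ring
  have hd : 0 < lam1 - δ1 := by linarith
  have e1 : ((lam0 + δ0) / n0) * (n1 / (lam1 - δ1))
      = (n1 * lam0 + n0 * δ1) / (n0 * (lam1 - δ1)) := by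
    rw [div_mul_div_comm]
    congr 1
    rw [hδ0]
    field_simp
  have e2 : (lam0 / n0) * (n1 / lam1) + Δ = (n1 * lam0 + Δ * n0 * lam1) / (n0 * lam1) := by
    field_simp
  rw [e1, e2, div_eq_div_iff (by positivity) (by positivity)]
  linear_combination n0 * hk
end

section
/- Let E be a compact subset of ℝ^d, Q a probability measure on E, Φ : E → ℝ^k a continuous map, λ ∈ ℝ^k and t ∈ ℝ^k. Suppose T : E → E is a measurable map such that for every y ∈ E, ‖T(y) − y‖² − ⟨λ, Φ(T(y))⟩ = inf_{x ∈ E} (‖x − y‖² − ⟨λ, Φ(x)⟩), and suppose ∫_E Φ(T(y)) dQ(y) = t. Then the pushforward measure T#Q satisfies ∫_E Φ d(T#Q) = t, its transport cost satisfies TC(Q, T#Q) = ∫_E ‖T(y) − y‖² dQ(y), and T#Q minimizes the transport cost from Q over the constraint set: for every probability measure P on E with ∫_E Φ dP = t, TC(Q, P) ≥ TC(Q, T#Q). -/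
open MeasureTheory

/-- The squared transport cost between two measures on `α` with cost function `cost`:
the infimum over all couplings `γ` (measures on `α × α` with the prescribed marginals)
of `∫ cost(x,y) dγ(x,y)`. -/
noncomputable def transportCost {α : Type*} [MeasurableSpace α] (cost : α → α → ℝ)
    (μ ν : Measure α) : ℝ :=
  sInf ((fun γ : Measure (α × α) => ∫ p, cost p.1 p.2 ∂γ) ''
    {γ | γ.map Prod.fst = μ ∧ γ.map Prod.snd = ν})

lemma aux_integrable {α X : Type*} [MeasurableSpace α] [TopologicalSpace X] [CompactSpace X]
    [MeasurableSpace X] [BorelSpace X] (μ : Measure α) [IsFiniteMeasure μ]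
    (f : X → ℝ) (hf : Continuous f) (m : α → X) (hm : Measurable m) :
    Integrable (fun a => f (m a)) μ := by
  obtain ⟨C, hC⟩ := (isCompact_range hf).isBounded.exists_norm_le
  exact Integrable.of_bound (hf.measurable.comp hm).aestronglyMeasurable C
    (Filter.Eventually.of_forall fun a => hC _ ⟨m a, rfl⟩)

/-- if `T` realizes, at every `y`, the infimum of
`x ↦ ‖x − y‖² − ⟨λ, Φ(x)⟩` over `E`, and `∫ Φ(T(y)) dQ(y) = t`, then the pushforward
`T#Q` satisfies the constraint `∫ Φ d(T#Q) = t`, its transport cost from `Q` equals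
`∫ ‖T(y) − y‖² dQ(y)`, and `T#Q` minimizes the transport cost from `Q` among all
probability measures `P` on `E` with `∫ Φ dP = t`. -/
theorem MK_projection_equality_constraint (d k : ℕ)
    (E : Set (EuclideanSpace ℝ (Fin d))) (hE : IsCompact E)
    (Q : Measure E) (hQ : IsProbabilityMeasure Q)
    (Φ : E → Fin k → ℝ) (hΦ : Continuous Φ)
    (lam t : Fin k → ℝ)
    (T : E → E) (hT : Measurable T)
    (hTopt : ∀ y : E,
      ‖(T y : EuclideanSpace ℝ (Fin d)) - (y : EuclideanSpace ℝ (Fin d))‖ ^ 2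
          - ∑ j, lam j * Φ (T y) j
        = ⨅ x : E,
            (‖(x : EuclideanSpace ℝ (Fin d)) - (y : EuclideanSpace ℝ (Fin d))‖ ^ 2
              - ∑ j, lam j * Φ x j))
    (hfeas : ∀ j, ∫ y : E, Φ (T y) j ∂Q = t j) :
    (∀ j, ∫ x : E, Φ x j ∂(Q.map T) = t j) ∧
      transportCost (fun x y : E =>
          ‖(x : EuclideanSpace ℝ (Fin d)) - (y : EuclideanSpace ℝ (Fin d))‖ ^ 2)
          Q (Q.map T)
        = ∫ y : E,
            ‖(T y : EuclideanSpace ℝ (Fin d)) - (y : EuclideanSpace ℝ (Fin d))‖ ^ 2 ∂Q ∧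
      ∀ P : Measure E, IsProbabilityMeasure P → (∀ j, ∫ x : E, Φ x j ∂P = t j) →
        transportCost (fun x y : E =>
            ‖(x : EuclideanSpace ℝ (Fin d)) - (y : EuclideanSpace ℝ (Fin d))‖ ^ 2)
            Q (Q.map T)
          ≤ transportCost (fun x y : E =>
              ‖(x : EuclideanSpace ℝ (Fin d)) - (y : EuclideanSpace ℝ (Fin d))‖ ^ 2)
              Q P := by
  have : CompactSpace E := isCompact_iff_compactSpace.mp hE
  have hΦj : ∀ j, Continuous (fun x => Φ x j) := fun j => (continuous_apply j).comp hΦ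
  have hg : Continuous (fun x : E => ∑ j, lam j * Φ x j) :=
    continuous_finsetSum _ fun j _ => continuous_const.mul (hΦj j)
  have hc : Continuous (fun p : E × E =>
      ‖(p.1 : EuclideanSpace ℝ (Fin d)) - (p.2 : EuclideanSpace ℝ (Fin d))‖ ^ 2) := by
    fun_prop
  have hpt : ∀ y x : E,
      ‖(T y : EuclideanSpace ℝ (Fin d)) - (y : EuclideanSpace ℝ (Fin d))‖ ^ 2
          - ∑ j, lam j * Φ (T y) j
        ≤ ‖(x : EuclideanSpace ℝ (Fin d)) - (y : EuclideanSpace ℝ (Fin d))‖ ^ 2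
              - ∑ j, lam j * Φ x j := by
    intro y x
    rw [hTopt y]
    refine ciInf_le ?_ x
    have h2 : Continuous (fun x : E =>
        ‖(x : EuclideanSpace ℝ (Fin d)) - (y : EuclideanSpace ℝ (Fin d))‖ ^ 2
              - ∑ j, lam j * Φ x j) := by
      refine Continuous.sub ?_ hg
      fun_prop
    exact (isCompact_range h2).bddBelow
  have hlin : ∀ (μ : Measure E) (_ : IsProbabilityMeasure μ) (m : E → E) (_ : Measurable m),
      (∀ j, ∫ y, Φ (m y) j ∂μ = t j) →
      ∫ y, ∑ j, lam j * Φ (m y) j ∂μ = ∑ j, lam j * t j := by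
    intro μ _ m hm h
    rw [integral_finsetSum]
    · simp_rw [integral_const_mul, h]
    · intro j _
      exact (aux_integrable μ (fun x => Φ x j) (hΦj j) m hm).const_mul _
  have key : ∀ P : Measure E, IsProbabilityMeasure P → (∀ j, ∫ x : E, Φ x j ∂P = t j) →
      ∀ γ : Measure (E × E), γ.map Prod.fst = Q → γ.map Prod.snd = P →
      ∫ y : E, ‖(T y : EuclideanSpace ℝ (Fin d)) - (y : EuclideanSpace ℝ (Fin d))‖ ^ 2 ∂Q
        ≤ ∫ p : E × E,
          ‖(p.1 : EuclideanSpace ℝ (Fin d)) - (p.2 : EuclideanSpace ℝ (Fin d))‖ ^ 2 ∂γ := by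
    intro P hP hPt γ h1 h2
    have : IsProbabilityMeasure γ := by
      constructor
      have := hQ.measure_univ
      rwa [← h1, Measure.map_apply measurable_fst MeasurableSet.univ, Set.preimage_univ] at this
    have hTm : Measurable (fun y : E => (T y, y)) := hT.prodMk measurable_id
    have iA : Integrable (fun y : E =>
        ‖(T y : EuclideanSpace ℝ (Fin d)) - (y : EuclideanSpace ℝ (Fin d))‖ ^ 2) Q :=
      aux_integrable Q (fun p : E × E =>
        ‖(p.1 : EuclideanSpace ℝ (Fin d)) - (p.2 : EuclideanSpace ℝ (Fin d))‖ ^ 2) hc (fun y => (T y, y)) hTm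
    have iB : Integrable (fun y : E => ∑ j, lam j * Φ (T y) j) Q :=
      aux_integrable Q (fun x : E => ∑ j, lam j * Φ x j) hg T hT
    have iA' : Integrable (fun p : E × E => ‖(T p.1 : EuclideanSpace ℝ (Fin d))
        - (p.1 : EuclideanSpace ℝ (Fin d))‖ ^ 2 - ∑ j, lam j * Φ (T p.1) j) γ :=
      (aux_integrable γ (fun p : E × E =>
        ‖(p.1 : EuclideanSpace ℝ (Fin d)) - (p.2 : EuclideanSpace ℝ (Fin d))‖ ^ 2) hc (fun p => (T p.1, p.1)) (hTm.comp measurable_fst)).sub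
        (aux_integrable γ (fun x : E => ∑ j, lam j * Φ x j) hg (fun p => T p.1) (hT.comp measurable_fst))
    have iC : Integrable (fun p : E × E =>
        ‖(p.1 : EuclideanSpace ℝ (Fin d)) - (p.2 : EuclideanSpace ℝ (Fin d))‖ ^ 2) γ :=
      aux_integrable γ (fun p : E × E =>
        ‖(p.1 : EuclideanSpace ℝ (Fin d)) - (p.2 : EuclideanSpace ℝ (Fin d))‖ ^ 2) hc (fun p => p) measurable_id
    have iD : Integrable (fun p : E × E => ∑ j, lam j * Φ p.2 j) γ :=
      aux_integrable γ (fun x : E => ∑ j, lam j * Φ x j) hg Prod.snd measurable_snd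
    have hle := integral_mono iA' (iC.sub iD) (fun p => by
      have := hpt p.1 p.2
      rw [norm_sub_rev (p.2 : EuclideanSpace ℝ (Fin d))] at this
      exact this)
    have e1 : ∫ p : E × E, (‖(T p.1 : EuclideanSpace ℝ (Fin d))
        - (p.1 : EuclideanSpace ℝ (Fin d))‖ ^ 2 - ∑ j, lam j * Φ (T p.1) j) ∂γ
        = ∫ y : E, (‖(T y : EuclideanSpace ℝ (Fin d))
        - (y : EuclideanSpace ℝ (Fin d))‖ ^ 2 - ∑ j, lam j * Φ (T y) j) ∂Q := by
      have hm := (iA.sub iB).aestronglyMeasurable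
      rw [← h1] at hm ⊢
      exact (integral_map measurable_fst.aemeasurable hm).symm
    have e2 : ∫ p : E × E, ∑ j, lam j * Φ p.2 j ∂γ = ∑ j, lam j * t j := by
      rw [← hlin P hP id measurable_id hPt, ← h2]
      exact (integral_map measurable_snd.aemeasurable hg.aestronglyMeasurable).symm
    rw [e1, integral_sub iA iB, hlin Q hQ T hT hfeas] at hle
    have e3 := integral_sub iC iD
    rw [e2] at e3
    have hle' := hle.trans_eq e3
    linarith
  have hmapP : IsProbabilityMeasure (Q.map T) := Measure.isProbabilityMeasure_map hT.aemeasurable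
  have hfst : ∀ j, ∫ x : E, Φ x j ∂(Q.map T) = t j := by
    intro j
    rw [integral_map hT.aemeasurable (hΦj j).aestronglyMeasurable, hfeas j]
  have hcost : transportCost (fun x y : E =>
          ‖(x : EuclideanSpace ℝ (Fin d)) - (y : EuclideanSpace ℝ (Fin d))‖ ^ 2)
          Q (Q.map T)
        = ∫ y : E,
            ‖(T y : EuclideanSpace ℝ (Fin d)) - (y : EuclideanSpace ℝ (Fin d))‖ ^ 2 ∂Q := by
    refine IsLeast.csInf_eq ⟨⟨Q.map (fun y => (y, T y)), ⟨?_, ?_⟩, ?_⟩, ?_⟩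
    · rw [Measure.map_map measurable_fst (measurable_id'.prodMk hT)]
      exact Measure.map_id
    · rw [Measure.map_map measurable_snd (measurable_id'.prodMk hT)]
      rfl
    · refine (integral_map (measurable_id'.prodMk hT).aemeasurable
        hc.aestronglyMeasurable).trans ?_
      refine integral_congr_ae (Filter.Eventually.of_forall fun y => ?_)
      simp only []
      rw [norm_sub_rev]
    · rintro _ ⟨γ, ⟨h1, h2⟩, rfl⟩
      exact key _ hmapP hfst γ h1 h2
  refine ⟨hfst, hcost, fun P hP hPt => ?_⟩
  rw [hcost]
  refine le_csInf ⟨_, ⟨Q.prod P, ⟨?_, ?_⟩, rfl⟩⟩ ?_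
  · simp
  · simp
  · rintro _ ⟨γ, ⟨h1, h2⟩, rfl⟩
    exact key P hP hPt γ h1 h2
end

section
/- Let E be a compact subset of ℝ^d, Q a probability measure on E, Φ : E → ℝ^k a continuous map, t ∈ ℝ^k, and λ ∈ ℝ^k with all components nonnegative. Suppose T : E → E is a measurable map such that for every y ∈ E, ‖T(y) − y‖² − ⟨λ, Φ(T(y))⟩ = inf_{x ∈ E} (‖x − y‖² − ⟨λ, Φ(x)⟩). Suppose further that the feasibility and complementary slackness conditions hold: ∫_E Φ(T(y)) dQ(y) ≥ t componentwise, and ⟨λ, t − ∫_E Φ(T(y)) dQ(y)⟩ = 0. Then T#Q minimizes the transport cost from Q over the inequality-constrained set: for every probability measure P on E with ∫_E Φ dP ≥ t componentwise, TC(Q, P) ≥ TC(Q, T#Q), and TC(Q, T#Q) = ∫_E ‖T(y) − y‖² dQ(y). -/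
open MeasureTheory

/-- with `λ ≥ 0` componentwise, if `T` realizes at every `y` the infimum of
`x ↦ ‖x − y‖² − ⟨λ, Φ(x)⟩` over `E`, and the feasibility (`∫ Φ(T(y)) dQ ≥ t`
componentwise) and complementary slackness (`⟨λ, t − ∫ Φ(T(y)) dQ⟩ = 0`) conditions
hold, then `T#Q` minimizes the transport cost from `Q` among all probability measures
`P` on `E` with `∫ Φ dP ≥ t` componentwise, and its transport cost from `Q` equals
`∫ ‖T(y) − y‖² dQ(y)`. -/
theorem MK_projection_inequality_constraint (d k : ℕ)
    (E : Set (EuclideanSpace ℝ (Fin d))) (hE : IsCompact E)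
    (Q : Measure E) (hQ : IsProbabilityMeasure Q)
    (Φ : E → Fin k → ℝ) (hΦ : Continuous Φ)
    (t lam : Fin k → ℝ) (hlam : ∀ j, 0 ≤ lam j)
    (T : E → E) (hT : Measurable T)
    (hTopt : ∀ y : E,
      ‖(T y : EuclideanSpace ℝ (Fin d)) - (y : EuclideanSpace ℝ (Fin d))‖ ^ 2
          - ∑ j, lam j * Φ (T y) j
        = ⨅ x : E,
            (‖(x : EuclideanSpace ℝ (Fin d)) - (y : EuclideanSpace ℝ (Fin d))‖ ^ 2
              - ∑ j, lam j * Φ x j))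
    (hfeas : ∀ j, t j ≤ ∫ y : E, Φ (T y) j ∂Q)
    (hcs : ∑ j, lam j * (t j - ∫ y : E, Φ (T y) j ∂Q) = 0) :
    (∀ P : Measure E, IsProbabilityMeasure P → (∀ j, t j ≤ ∫ x : E, Φ x j ∂P) →
        transportCost (fun x y : E =>
            ‖(x : EuclideanSpace ℝ (Fin d)) - (y : EuclideanSpace ℝ (Fin d))‖ ^ 2)
            Q (Q.map T)
          ≤ transportCost (fun x y : E =>
              ‖(x : EuclideanSpace ℝ (Fin d)) - (y : EuclideanSpace ℝ (Fin d))‖ ^ 2)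
              Q P) ∧
      transportCost (fun x y : E =>
          ‖(x : EuclideanSpace ℝ (Fin d)) - (y : EuclideanSpace ℝ (Fin d))‖ ^ 2)
          Q (Q.map T)
        = ∫ y : E,
            ‖(T y : EuclideanSpace ℝ (Fin d)) - (y : EuclideanSpace ℝ (Fin d))‖ ^ 2 ∂Q := by
  haveI : CompactSpace E := isCompact_iff_compactSpace.mp hE
  have cint : ∀ (f : E → ℝ), Continuous f → ∀ (m : Measure E), IsFiniteMeasure m →
      Integrable f m := fun f hf m hm =>
    hf.integrable_of_hasCompactSupport (HasCompactSupport.of_compactSpace f)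
  have cint2 : ∀ (f : E × E → ℝ), Continuous f → ∀ (m : Measure (E × E)), IsFiniteMeasure m →
      Integrable f m := fun f hf m hm =>
    hf.integrable_of_hasCompactSupport (HasCompactSupport.of_compactSpace f)
  have hΦj : ∀ j, Continuous fun x => Φ x j := fun j => (continuous_apply j).comp hΦ
  set L : E → ℝ := fun x => ∑ j, lam j * Φ x j with hL
  have hLc : Continuous L := continuous_finsetSum _ fun j _ => continuous_const.mul (hΦj j)
  set c : E × E → ℝ := fun p =>
    ‖(p.1 : EuclideanSpace ℝ (Fin d)) - (p.2 : EuclideanSpace ℝ (Fin d))‖ ^ 2 with hc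
  have hcc : Continuous c := by fun_prop
  have hopt : ∀ y x : E, c (T y, y) - L (T y) ≤ c (y, x) - L x := by
    intro y x
    have h1 : c (T y, y) - L (T y) = ⨅ x : E, (c (x, y) - L x) := hTopt y
    have h2 : c (y, x) = c (x, y) := by simp only [hc]; rw [norm_sub_rev]
    rw [h1, h2]
    have hcont : Continuous fun x : E => c (x, y) - L x := by fun_prop
    exact ciInf_le (isCompact_range hcont).bddBelow x
  have hLint : ∀ m : Measure E, IsFiniteMeasure m →
      ∫ x, L x ∂m = ∑ j, lam j * ∫ x, Φ x j ∂m := by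
    intro m hm
    simp only [hL]
    rw [integral_finsetSum _ fun j _ => (cint _ (hΦj j) m hm).const_mul _]
    simp only [integral_const_mul]
  haveI hQT : IsProbabilityMeasure (Q.map T) := Measure.isProbabilityMeasure_map hT.aemeasurable
  have hmapΦ : ∀ j, ∫ x, Φ x j ∂(Q.map T) = ∫ y, Φ (T y) j ∂Q := fun j =>
    integral_map hT.aemeasurable (hΦj j).aestronglyMeasurable
  have hLT : ∫ y, L (T y) ∂Q = ∑ j, lam j * t j := by
    have : ∫ y, L (T y) ∂Q = ∫ x, L x ∂(Q.map T) :=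
      (integral_map hT.aemeasurable hLc.aestronglyMeasurable).symm
    rw [this, hLint _ inferInstance]
    simp only [hmapΦ]
    simp only [mul_sub, Finset.sum_sub_distrib] at hcs
    linarith
  have hLTi : Integrable (fun y => L (T y)) Q :=
    (cint L hLc (Q.map T) inferInstance).comp_measurable hT
  have hTm : Measurable fun y : E => (T y, y) := hT.prodMk measurable_id
  have hcTi : Integrable (fun y => c (T y, y)) Q := by
    haveI := Measure.isProbabilityMeasure_map (μ := Q) hTm.aemeasurable
    exact (cint2 c hcc (Q.map fun y : E => (T y, y)) inferInstance).comp_measurable hTm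
  have key : ∀ P : Measure E, IsProbabilityMeasure P → (∀ j, t j ≤ ∫ x : E, Φ x j ∂P) →
      ∀ γ : Measure (E × E), γ.map Prod.fst = Q → γ.map Prod.snd = P →
      ∫ y, c (T y, y) ∂Q ≤ ∫ p, c p ∂γ := by
    intro P hP hPt γ h1 h2
    haveI : IsFiniteMeasure γ := by
      constructor
      have : γ Set.univ = Q Set.univ := by
        rw [← h1, Measure.map_apply measurable_fst MeasurableSet.univ, Set.preimage_univ]
      rw [this]; exact measure_lt_top _ _
    have hF : Integrable (fun y => c (T y, y) - L (T y)) Q := hcTi.sub hLTi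
    have e1 : ∫ p, (c (T p.1, p.1) - L (T p.1)) ∂γ = ∫ y, (c (T y, y) - L (T y)) ∂Q := by
      have hF' := hF
      rw [← h1] at hF' ⊢
      exact (integral_map measurable_fst.aemeasurable hF'.aestronglyMeasurable).symm
    have i1 : Integrable (fun p : E × E => c (T p.1, p.1) - L (T p.1)) γ := by
      rw [← h1] at hF
      exact hF.comp_measurable measurable_fst
    have e2 : ∫ p, L p.2 ∂γ = ∫ x, L x ∂P := by
      rw [← h2]
      exact (integral_map measurable_snd.aemeasurable hLc.aestronglyMeasurable).symm
    have ic := cint2 c hcc γ inferInstance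
    have iL := cint2 (fun p => L p.2) (hLc.comp continuous_snd) γ inferInstance
    have h := integral_mono i1 (ic.sub iL) (fun p => hopt p.1 p.2)
    have e3 : ∫ p, (c - fun p : E × E => L p.2) p ∂γ = ∫ p, c p ∂γ - ∫ p, L p.2 ∂γ :=
      integral_sub ic iL
    rw [e1, e3, integral_sub hcTi hLTi, hLT, e2, hLint P inferInstance] at h
    have : ∑ j, lam j * t j ≤ ∑ j, lam j * ∫ x, Φ x j ∂P :=
      Finset.sum_le_sum fun j _ => mul_le_mul_of_nonneg_left (hPt j) (hlam j)
    linarith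
  have lower : ∀ P : Measure E, IsProbabilityMeasure P → (∀ j, t j ≤ ∫ x : E, Φ x j ∂P) →
      ∫ y, c (T y, y) ∂Q ≤ transportCost (fun x y : E => c (x, y)) Q P := by
    intro P hP hPt
    apply le_csInf
    · refine ⟨_, Q.prod P, ⟨?_, ?_⟩, rfl⟩
      · simp
      · simp
    · rintro _ ⟨γ, ⟨h1, h2⟩, rfl⟩
      exact key P hP hPt γ h1 h2
  have upper : transportCost (fun x y : E => c (x, y)) Q (Q.map T) ≤ ∫ y, c (T y, y) ∂Q := by
    have hm : Measurable fun y : E => (y, T y) := measurable_id.prodMk hT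
    apply csInf_le
    · refine ⟨0, ?_⟩
      rintro _ ⟨γ, -, rfl⟩
      exact integral_nonneg fun p => by simp only [hc]; positivity
    · refine ⟨Q.map fun y : E => (y, T y), ⟨?_, ?_⟩, ?_⟩
      · rw [Measure.map_map measurable_fst hm]
        exact Measure.map_id
      · rw [Measure.map_map measurable_snd hm]
        rfl
      · have := integral_map (μ := Q) hm.aemeasurable (f := c) hcc.aestronglyMeasurable
        refine Eq.trans this (integral_congr_ae (Filter.Eventually.of_forall fun y => ?_))
        simp only [hc]; rw [norm_sub_rev]
  refine ⟨fun P hP hPt => upper.trans (lower P hP hPt), le_antisymm upper (lower _ hQT ?_)⟩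
  intro j
  rw [hmapΦ]
  exact hfeas j
end

section
/- Let n ≥ 1, k ≥ 1, φ₁,…,φₙ ∈ ℝ^k and t ∈ ℝ^k. If the empirical covariance matrix C = (1/n)Σᵢφᵢφᵢᵀ − φ̄φ̄ᵀ (with φ̄ = (1/n)Σᵢφᵢ) is invertible, then the function H(ξ) = log Z(ξ) − ⟨ξ,t⟩ is strictly convex on ℝ^k. -/
theorem lse_strict {n : ℕ} (hn : 1 ≤ n) (u w : Fin n → ℝ) (α β : ℝ) (hα : 0 < α) (hβ : 0 < β)
    (hab : α + β = 1) (h : ¬ ∃ c, ∀ a, u a - w a = c) :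
    Real.log (∑ a, Real.exp (α * u a + β * w a)) <
      α * Real.log (∑ a, Real.exp (u a)) + β * Real.log (∑ a, Real.exp (w a)) := by
  have : Nonempty (Fin n) := ⟨⟨0, hn⟩⟩
  have pos : ∀ f : Fin n → ℝ, 0 < ∑ a, Real.exp (f a) := fun f =>
    Finset.sum_pos (fun a _ => Real.exp_pos _) Finset.univ_nonempty
  have norm1 : ∀ f : Fin n → ℝ, ∑ a, Real.exp (f a - Real.log (∑ a, Real.exp (f a))) = 1 := by
    intro f
    simp only [Real.exp_sub, Real.exp_log (pos f)]
    rw [← Finset.sum_div, div_self (pos f).ne']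
  have hA := norm1 u
  have hB := norm1 w
  set A := Real.log (∑ a, Real.exp (u a))
  set B := Real.log (∑ a, Real.exp (w a))
  have key : ∑ a, Real.exp (α * (u a - A) + β * (w a - B)) <
      ∑ a, (α * Real.exp (u a - A) + β * Real.exp (w a - B)) := by
    apply Finset.sum_lt_sum
    · intro a _
      exact convexOn_exp.2 (Set.mem_univ _) (Set.mem_univ _) hα.le hβ.le hab
    · by_contra hcon
      push Not at hcon
      apply h
      refine ⟨A - B, fun a => ?_⟩
      by_contra hne
      have hne' : u a - A ≠ w a - B := fun he => hne (by linarith)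
      have := strictConvexOn_exp.2 (Set.mem_univ _) (Set.mem_univ _) hne' hα hβ hab
      exact absurd this (not_lt.2 (hcon a (Finset.mem_univ _)))
  rw [Finset.sum_add_distrib, ← Finset.mul_sum, ← Finset.mul_sum, hA, hB, mul_one, mul_one,
    hab] at key
  have e : ∀ a, Real.exp (α * (u a - A) + β * (w a - B)) =
      Real.exp (α * u a + β * w a) / Real.exp (α * A + β * B) := by
    intro a
    rw [← Real.exp_sub]; congr 1; ring
  simp only [e] at key
  rw [← Finset.sum_div, div_lt_one (Real.exp_pos _)] at key
  exact (Real.log_lt_iff_lt_exp (pos _)).2 key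

/-- if the empirical covariance matrix of `φ₁,…,φₙ ∈ ℝ^k` is invertible,
then `H(ξ) = log Z(ξ) − ⟨ξ,t⟩` is strictly convex on `ℝ^k`, where
`Z(ξ) = (1/n)Σᵢ exp⟨φᵢ,ξ⟩`. -/
theorem H_strictConvex (n k : ℕ) (hn : 1 ≤ n) (hk : 1 ≤ k)
    (φ : Fin n → Fin k → ℝ) (t : Fin k → ℝ)
    (hC : IsUnit (Matrix.of (fun i j : Fin k =>
      (1 / n : ℝ) * ∑ a, φ a i * φ a j -
        ((1 / n : ℝ) * ∑ a, φ a i) * ((1 / n : ℝ) * ∑ a, φ a j)))) :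
    StrictConvexOn ℝ Set.univ (fun ξ : Fin k → ℝ =>
      Real.log ((1 / n : ℝ) * ∑ a, Real.exp (∑ j, φ a j * ξ j)) - ∑ j, ξ j * t j) := by
  have : Nonempty (Fin n) := ⟨⟨0, hn⟩⟩
  have hn0 : (n : ℝ) ≠ 0 := by positivity
  refine ⟨convex_univ, ?_⟩
  intro x _ y _ hxy α β hα hβ hab
  have hnc : ¬ ∃ c, ∀ a, (∑ j, φ a j * x j) - (∑ j, φ a j * y j) = c := by
    rintro ⟨c, hc⟩
    have hc' : ∀ a, ∑ j, φ a j * (x - y) j = c := by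
      intro a
      rw [← hc a, ← Finset.sum_sub_distrib]
      exact Finset.sum_congr rfl fun j _ => by simp [mul_sub]
    apply hxy
    apply sub_eq_zero.1
    apply Matrix.mulVec_injective_of_isUnit hC
    rw [Matrix.mulVec_zero]
    funext i
    simp only [Matrix.mulVec, dotProduct, Matrix.of_apply, Pi.zero_apply, sub_mul]
    rw [Finset.sum_sub_distrib]
    have h1 : ∑ j, (1 / n : ℝ) * (∑ a, φ a i * φ a j) * (x - y) j
        = (1 / n : ℝ) * ∑ a, φ a i * c := by
      simp only [Finset.mul_sum, Finset.sum_mul]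
      rw [Finset.sum_comm]
      refine Finset.sum_congr rfl fun a _ => ?_
      rw [← hc' a]
      simp only [Finset.mul_sum]
      exact Finset.sum_congr rfl fun j _ => by ring
    have h2 : ∑ j, ((1 / n : ℝ) * ∑ a, φ a j) * (x - y) j = c := by
      have : ∑ j, ((1 / n : ℝ) * ∑ a, φ a j) * (x - y) j
        = (1 / n : ℝ) * ∑ a, ∑ j, φ a j * (x - y) j := by
        simp only [Finset.mul_sum, Finset.sum_mul]
        rw [Finset.sum_comm]
        exact Finset.sum_congr rfl fun a _ => Finset.sum_congr rfl fun j _ => by ring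
      rw [this]
      simp only [hc']
      simp
      field_simp
    rw [h1]
    simp only [mul_assoc ((1 / n : ℝ) * ∑ a, φ a i)]
    rw [← Finset.mul_sum, h2, ← Finset.sum_mul]
    ring
  have key := lse_strict hn _ _ α β hα hβ hab hnc
  have hlog : ∀ f : Fin n → ℝ, Real.log ((1 / n : ℝ) * ∑ a, Real.exp (f a)) =
      Real.log (1 / n : ℝ) + Real.log (∑ a, Real.exp (f a)) := fun f =>
    Real.log_mul (by positivity)
      (Finset.sum_pos (fun a _ => Real.exp_pos _) Finset.univ_nonempty).ne'
  have e1 : ∀ a, ∑ j, φ a j * (α • x + β • y) j =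
      α * (∑ j, φ a j * x j) + β * ∑ j, φ a j * y j := by
    intro a
    rw [Finset.mul_sum, Finset.mul_sum, ← Finset.sum_add_distrib]
    exact Finset.sum_congr rfl fun j _ => by simp; ring
  have e2 : ∑ j, (α • x + β • y) j * t j = α * (∑ j, x j * t j) + β * ∑ j, y j * t j := by
    rw [Finset.mul_sum, Finset.mul_sum, ← Finset.sum_add_distrib]
    exact Finset.sum_congr rfl fun j _ => by simp; ring
  simp only [hlog, e2, smul_eq_mul]
  simp only [e1]
  have : Real.log (1 / n : ℝ) = α * Real.log (1 / n : ℝ) + β * Real.log (1 / n : ℝ) := by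
    rw [← add_mul, hab, one_mul]
  linarith
end

section
/- Let n ≥ 1, k ≥ 1, φ₁,…,φₙ ∈ ℝ^k and t ∈ ℝ^k. Assume the empirical covariance matrix C = (1/n)Σᵢφᵢφᵢᵀ − φ̄φ̄ᵀ (with φ̄ = (1/n)Σᵢφᵢ) is invertible, and that t = Σᵢ wᵢφᵢ for some weights wᵢ > 0 with Σᵢ wᵢ = 1. Then the function H(ξ) = log Z(ξ) − ⟨ξ,t⟩ attains its global minimum on ℝ^k, and the minimizer ξ(t) is unique. -/
theorem aux_min {n k : ℕ} (L : (Fin k → ℝ) →ₗ[ℝ] (Fin n → ℝ))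
    (hL : Function.Injective L) (w : Fin n → ℝ) (hw : ∀ i, 0 < w i) (hw1 : ∑ i, w i = 1)
    (hn : 1 ≤ n) (h0 : ∀ x, ∑ a, w a * L x a = 0) :
    ∃! x : Fin k → ℝ, ∀ y, ∑ a, Real.exp (L x a) ≤ ∑ a, Real.exp (L y a) := by
  have hcl : Topology.IsClosedEmbedding L :=
    LinearMap.isClosedEmbedding_of_injective (LinearMap.ker_eq_bot.mpr hL)
  have hLc : Continuous L := hcl.continuous
  have hcont : Continuous (fun x => ∑ a, Real.exp (L x a)) := by
    refine continuous_finset_sum _ fun a _ => Real.continuous_exp.comp ?_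
    exact (continuous_apply a).comp hLc
  have hn' : (1 : ℝ) ≤ n := by exact_mod_cast hn
  have hM : 0 ≤ Real.log n := Real.log_nonneg hn'
  set M := Real.log n with hMdef
  have hK : IsCompact (L ⁻¹' (Set.Icc (fun a => -(M / w a)) (fun _ => M))) :=
    hcl.isCompact_preimage isCompact_Icc
  have h0K : (0 : Fin k → ℝ) ∈ L ⁻¹' (Set.Icc (fun a => -(M / w a)) (fun _ => M)) := by
    simp only [Set.mem_preimage, map_zero, Set.mem_Icc]
    refine ⟨fun a => ?_, fun a => hM⟩
    have := div_nonneg hM (hw a).le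
    simpa using this
  have hS0 : ∑ a, Real.exp (L 0 a) = n := by simp
  have hsub : ∀ x, ∑ a, Real.exp (L x a) ≤ n →
      x ∈ L ⁻¹' (Set.Icc (fun a => -(M / w a)) (fun _ => M)) := by
    intro x hx
    have hup : ∀ a, L x a ≤ M := by
      intro a
      rw [hMdef, Real.le_log_iff_exp_le (by linarith)]
      exact (Finset.single_le_sum (f := fun a => Real.exp (L x a))
        (fun i _ => (Real.exp_pos _).le) (Finset.mem_univ a)).trans hx
    refine ⟨fun a => ?_, hup⟩
    have h1 : w a * (M - L x a) ≤ ∑ b, w b * (M - L x b) :=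
      Finset.single_le_sum (f := fun b => w b * (M - L x b))
        (fun i _ => mul_nonneg (hw i).le (by linarith [hup i])) (Finset.mem_univ a)
    have h2 : ∑ b, w b * (M - L x b) = M := by
      simp only [mul_sub, Finset.sum_sub_distrib, h0, ← Finset.sum_mul, hw1]; ring
    rw [h2] at h1
    have h3 : 0 ≤ w a * M := mul_nonneg (hw a).le hM
    change -(M / w a) ≤ L x a
    rw [← neg_div, div_le_iff₀ (hw a)]
    nlinarith
  obtain ⟨x, hxK, hx⟩ := hK.exists_isMinOn ⟨0, h0K⟩ hcont.continuousOn
  have hx0 : ∑ a, Real.exp (L x a) ≤ n := by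
    rw [← hS0]; exact hx h0K
  refine ⟨x, fun y => ?_, fun y hy => ?_⟩
  · by_cases h : ∑ a, Real.exp (L y a) ≤ n
    · exact hx (hsub y h)
    · exact hx0.trans (not_le.mp h).le
  · have hxy : ∑ a, Real.exp (L y a) ≤ ∑ a, Real.exp (L x a) := hy x
    have hmid := hy ((1 / 2 : ℝ) • (x + y))
    have key : ∑ a, (Real.exp (L x a / 2) - Real.exp (L y a / 2)) ^ 2 =
        ∑ a, Real.exp (L x a) + ∑ a, Real.exp (L y a)
          - 2 * ∑ a, Real.exp (L ((1 / 2 : ℝ) • (x + y)) a) := by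
      rw [Finset.mul_sum, ← Finset.sum_add_distrib, ← Finset.sum_sub_distrib]
      refine Finset.sum_congr rfl fun a _ => ?_
      have e1 : Real.exp (L x a) = Real.exp (L x a / 2) ^ 2 := by
        rw [← Real.exp_nat_mul]; congr 1; push_cast; ring
      have e2 : Real.exp (L y a) = Real.exp (L y a / 2) ^ 2 := by
        rw [← Real.exp_nat_mul]; congr 1; push_cast; ring
      have e3 : Real.exp (L ((1 / 2 : ℝ) • (x + y)) a)
          = Real.exp (L x a / 2) * Real.exp (L y a / 2) := by
        rw [← Real.exp_add]; congr 1
        simp only [map_smul, map_add, Pi.smul_apply, Pi.add_apply, smul_eq_mul]; ring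
      rw [e1, e2, e3]; ring
    have hx' : ∑ a, Real.exp (L x a) ≤ ∑ a, Real.exp (L y a) := by
      by_cases h : ∑ a, Real.exp (L y a) ≤ n
      · exact hx (hsub y h)
      · exact hx0.trans (not_le.mp h).le
    have hz : ∑ a, (Real.exp (L x a / 2) - Real.exp (L y a / 2)) ^ 2 = 0 :=
      le_antisymm (by rw [key]; linarith) (Finset.sum_nonneg fun _ _ => sq_nonneg _)
    rw [Finset.sum_eq_zero_iff_of_nonneg (fun _ _ => sq_nonneg _)] at hz
    apply hL
    funext a
    have h := hz a (Finset.mem_univ a)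
    have h' := Real.exp_injective (sub_eq_zero.mp (pow_eq_zero_iff (two_ne_zero) |>.mp h))
    linarith

/-- if the empirical covariance matrix of `φ₁,…,φₙ ∈ ℝ^k` is invertible and
`t` is a convex combination of the `φᵢ` with strictly positive weights, then
`H(ξ) = log Z(ξ) − ⟨ξ,t⟩` attains its global minimum on `ℝ^k` at a unique point. -/
theorem H_has_unique_global_minimizer (n k : ℕ) (hn : 1 ≤ n) (hk : 1 ≤ k)
    (φ : Fin n → Fin k → ℝ) (t : Fin k → ℝ)
    (hC : IsUnit (Matrix.of (fun i j : Fin k =>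
      (1 / n : ℝ) * ∑ a, φ a i * φ a j -
        ((1 / n : ℝ) * ∑ a, φ a i) * ((1 / n : ℝ) * ∑ a, φ a j))))
    (w : Fin n → ℝ) (hw : ∀ i, 0 < w i) (hw1 : ∑ i, w i = 1)
    (ht : ∀ j, t j = ∑ i, w i * φ i j) :
    ∃! ξt : Fin k → ℝ, ∀ ξ : Fin k → ℝ,
      (Real.log ((1 / n : ℝ) * ∑ a, Real.exp (∑ j, φ a j * ξt j)) - ∑ j, ξt j * t j)
        ≤ (Real.log ((1 / n : ℝ) * ∑ a, Real.exp (∑ j, φ a j * ξ j)) - ∑ j, ξ j * t j) := by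
  have hn0 : (0 : ℝ) < n := by exact_mod_cast hn
  let L : (Fin k → ℝ) →ₗ[ℝ] (Fin n → ℝ) :=
    Matrix.mulVecLin (Matrix.of fun a j => φ a j - t j)
  have hLa : ∀ x a, L x a = ∑ j, φ a j * x j - ∑ j, x j * t j := by
    intro x a
    simp only [L, Matrix.mulVecLin_apply, Matrix.mulVec, dotProduct, Matrix.of_apply]
    rw [← Finset.sum_sub_distrib]
    exact Finset.sum_congr rfl fun j _ => by ring
  have hinj : Function.Injective L := by
    rw [← LinearMap.ker_eq_bot, LinearMap.ker_eq_bot']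
    intro x hx
    have hc : ∀ a, ∑ j, φ a j * x j = ∑ j, x j * t j := by
      intro a
      have := hLa x a
      rw [hx] at this
      simp only [Pi.zero_apply] at this
      linarith
    apply Matrix.mulVec_injective_of_isUnit hC
    rw [Matrix.mulVec_zero]
    funext i
    simp only [Matrix.mulVec, dotProduct, Matrix.of_apply, Pi.zero_apply]
    have e1 : ∑ j, (∑ a, φ a i * φ a j) * x j = (∑ a, φ a i) * ∑ j, x j * t j := by
      simp only [Finset.sum_mul]
      rw [Finset.sum_comm]
      refine Finset.sum_congr rfl fun a _ => ?_
      rw [← hc a, Finset.mul_sum]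
      exact Finset.sum_congr rfl fun j _ => by ring
    have e2 : ∑ j, (∑ a, φ a j) * x j = n * ∑ j, x j * t j := by
      simp only [Finset.sum_mul]
      rw [Finset.sum_comm]
      simp [hc]
    calc _ = (1 / n : ℝ) * ∑ j, (∑ a, φ a i * φ a j) * x j
          - ((1 / n : ℝ) * ∑ a, φ a i) * ((1 / n : ℝ) * ∑ j, (∑ a, φ a j) * x j) := by
            rw [Finset.mul_sum (s := Finset.univ) (f := fun j => (∑ a, φ a i * φ a j) * x j),
              Finset.mul_sum (s := Finset.univ) (f := fun j => (∑ a, φ a j) * x j),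
              Finset.mul_sum (s := Finset.univ) (f := fun j => (1 / n : ℝ) * ((∑ a, φ a j) * x j)),
              ← Finset.sum_sub_distrib]
            exact Finset.sum_congr rfl fun j _ => by ring
      _ = 0 := by
            rw [e1, e2]; field_simp; ring
  have h0 : ∀ x, ∑ a, w a * L x a = 0 := by
    intro x
    simp only [hLa, mul_sub, Finset.sum_sub_distrib, ← Finset.sum_mul, hw1, one_mul]
    rw [sub_eq_zero]
    simp only [ht, Finset.mul_sum]
    rw [Finset.sum_comm]
    exact Finset.sum_congr rfl fun j _ => Finset.sum_congr rfl fun a _ => by ring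
  have hH : ∀ x : Fin k → ℝ,
      Real.log ((1 / n : ℝ) * ∑ a, Real.exp (∑ j, φ a j * x j)) - ∑ j, x j * t j
        = Real.log ((1 / n : ℝ) * ∑ a, Real.exp (L x a)) := by
    intro x
    haveI : Nonempty (Fin n) := ⟨⟨0, hn⟩⟩
    have hp : 0 < ∑ a, Real.exp (∑ j, φ a j * x j) :=
      Finset.sum_pos (fun _ _ => Real.exp_pos _) Finset.univ_nonempty
    simp only [hLa, Real.exp_sub]
    rw [← Finset.sum_div, ← mul_div_assoc, Real.log_div (by positivity) (Real.exp_ne_zero _),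
      Real.log_exp]
  have hiff : ∀ x y : Fin k → ℝ,
      (Real.log ((1 / n : ℝ) * ∑ a, Real.exp (∑ j, φ a j * x j)) - ∑ j, x j * t j
        ≤ Real.log ((1 / n : ℝ) * ∑ a, Real.exp (∑ j, φ a j * y j)) - ∑ j, y j * t j) ↔
      ∑ a, Real.exp (L x a) ≤ ∑ a, Real.exp (L y a) := by
    intro x y
    haveI : Nonempty (Fin n) := ⟨⟨0, hn⟩⟩
    have hp : ∀ x, 0 < ∑ a, Real.exp (L x a) := fun x =>
      Finset.sum_pos (fun _ _ => Real.exp_pos _) Finset.univ_nonempty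
    have hpx := hp x
    have hpy := hp y
    rw [hH, hH, Real.log_le_log_iff (by positivity) (by positivity),
      mul_le_mul_iff_right₀ (by positivity)]
  simp only [hiff]
  exact aux_min L hinj w hw hw1 hn h0
end
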